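/- With Y₃' := ⁅Y₁', Y₂'⁆ and Y₄' := ⁅Y₁', Y₃'⁆, one has ⁅Y₂', Y₃'⁆ = 0 and ⁅Y₂', Y₄'⁆ = 0. -/

import Mathlib

/-!
Write `X₀` for `∂/∂u`. The commutator with `D` controls derivations that kill every `E q`: such a
`Z` with `⁅D, Z⁆ = 0` and `Z u₁ = 0` vanishes, because `Z u_{n+1} = Z (D uₙ) = D (Z uₙ)`
(`eq_zero_of_comm`). Both brackets in the theorem kill `E q` and `u₁`, so it is enough that they
commute with `D`. For `f = E a` one has `⁅D, X_f⁆ = -f X₀` and `⁅X₀, X_f⁆ = a X_f`, whence, by the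
Jacobi identity,

* `⁅D, Y₃⁆ = 2 E(1) Y₂ + E(-2) Y₁`, `⁅X₀, Y₃⁆ = -Y₃`,
* `⁅D, Y₄⁆ = 3 E(1) Y₃`, `⁅X₀, Y₄⁆ = 0`,
* `⁅D, ⁅Y₂, Y₃⁆⁆ = E(-2) Y₃ + E(-2) ⁅Y₂, Y₁⁆ = 0`,
* `⁅D, ⁅Y₂, Y₄⁆⁆ = -E(-2) ⁅X₀, Y₄⁆ + 3 E(1) ⁅Y₂, Y₃⁆ = 0`.
-/


set_option synthInstance.maxHeartbeats 1000000
set_option maxHeartbeats 1000000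

noncomputable section

/-- The algebra of "quasipolynomials": the group algebra of `ℤ` (group element `q`
modelling `e^{q·u}`) with coefficients in polynomials in countably many variables
(variable of index `n-1` modelling the `n`-th `x`-derivative of `u`). -/
abbrev QP : Type := AddMonoidAlgebra (MvPolynomial ℕ ℂ) ℤ

/-- `E q` models `e^{q·u}`. -/
def E (q : ℤ) : QP := AddMonoidAlgebra.single q 1

/-- `uvar n` models the `n`-th derivative `∂ⁿu/∂xⁿ` (for `n ≥ 1`); it is the
polynomial generator of index `n - 1`. -/
def uvar (n : ℕ) : QP := AddMonoidAlgebra.single 0 (MvPolynomial.X (n - 1))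

/-- `D` is the total `x`-derivative: the unique `ℂ`-derivation of `QP` with
`D uₙ = u_{n+1}` for `n ≥ 1` and `D (E q) = q • (u₁ * E q)`. -/
def IsD (D : Derivation ℂ QP QP) : Prop :=
  (∀ n : ℕ, 1 ≤ n → D (uvar n) = uvar (n + 1)) ∧
  (∀ q : ℤ, D (E q) = q • (uvar 1 * E q))

/-- `X₀` models `∂/∂u`: the unique `ℂ`-derivation with `X₀ uₙ = 0` and `X₀ (E q) = q • E q`. -/
def IsX0 (X : Derivation ℂ QP QP) : Prop :=
  (∀ n : ℕ, 1 ≤ n → X (uvar n) = 0) ∧ (∀ q : ℤ, X (E q) = q • E q)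

/-- `X_f` is the unique `ℂ`-derivation with `X_f (E q) = 0` for all `q` and
`X_f uₙ = D^[n-1] f` for all `n ≥ 1`. -/
def IsXf (D : Derivation ℂ QP QP) (f : QP) (Xf : Derivation ℂ QP QP) : Prop :=
  (∀ q : ℤ, Xf (E q) = 0) ∧ (∀ n : ℕ, 1 ≤ n → Xf (uvar n) = (⇑D)^[n - 1] f)

/-- The elements `E q` and `uₙ` generate the algebra, so a derivation killing them is zero. -/
lemma eq_zero_of_gen (Z : Derivation ℂ QP QP) (hE : ∀ q, Z (E q) = 0)
    (hu : ∀ n : ℕ, 1 ≤ n → Z (uvar n) = 0) : Z = 0 := by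
  have h0 : ∀ p : MvPolynomial ℕ ℂ, Z (AddMonoidAlgebra.single 0 p) = 0 := by
    intro p
    induction p using MvPolynomial.induction_on with
    | C a =>
      have : (AddMonoidAlgebra.single 0 (MvPolynomial.C a) : QP) = algebraMap ℂ QP a := rfl
      rw [this, Derivation.map_algebraMap]
    | add p q hp hq => rw [AddMonoidAlgebra.single_add, map_add, hp, hq, add_zero]
    | mul_X p n hp =>
      have : (AddMonoidAlgebra.single 0 (p * MvPolynomial.X n) : QP)
          = AddMonoidAlgebra.single 0 p * uvar (n + 1) := by
        simp [uvar]
      rw [this, Derivation.leibniz, hp, hu _ (by omega)]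
      simp
  ext x
  induction x using AddMonoidAlgebra.induction_linear with
  | zero => simp
  | add f g hf hg => simp_all
  | single q p =>
    have : (AddMonoidAlgebra.single q p : QP) = AddMonoidAlgebra.single 0 p * E q := by
      simp [E]
    rw [this, Derivation.leibniz, h0, hE]
    simp

/-- A derivation that commutes with `D` and kills all `E q` is determined by its value on `u₁`. -/
lemma eq_zero_of_comm (D Z : Derivation ℂ QP QP) (hD : IsD D) (hE : ∀ q, Z (E q) = 0)
    (h1 : Z (uvar 1) = 0) (hc : ⁅D, Z⁆ = 0) : Z = 0 := by
  refine eq_zero_of_gen Z hE fun n hn => ?_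
  induction n, hn using Nat.le_induction with
  | base => exact h1
  | succ n hn ih =>
    have h := congrArg (fun W : Derivation ℂ QP QP => W (uvar n)) hc
    simp only [Derivation.commutator_apply, ih, map_zero, hD.1 n hn, Derivation.zero_apply,
      zero_sub, neg_eq_zero] at h
    exact h

section Generic

variable {A : Type*} [CommRing A] [Algebra ℂ A]

lemma lie_smul_right' (P Q : Derivation ℂ A A) (f : A) (hf : P f = 0) :
    ⁅P, f • Q⁆ = f • ⁅P, Q⁆ := by
  ext x
  simp [Derivation.commutator_apply, hf]

lemma lie_smul_left' (P Q : Derivation ℂ A A) (f : A) (hf : Q f = 0) :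
    ⁅f • P, Q⁆ = f • ⁅P, Q⁆ := by
  ext x
  simp [Derivation.commutator_apply, hf, mul_sub]

/-- The Lie-algebraic core: `⁅D, ⁅Y₂, Y₃⁆⁆ = 0`, and once `⁅Y₂, Y₃⁆ = 0` also
`⁅D, ⁅Y₂, Y₄⁆⁆ = 0`. Here `f`, `g` stand for `E 1`, `E (-2)`. -/
lemma lie_D_brackets (D X Y1 Y2 Y3 Y4 : Derivation ℂ A A) (f g : A)
    (f1 : Y1 f = 0) (g1 : Y1 g = 0) (f2 : Y2 f = 0) (g2 : Y2 g = 0)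
    (d1 : ⁅D, Y1⁆ = -(f • X)) (d2 : ⁅D, Y2⁆ = -(g • X))
    (x1 : ⁅X, Y1⁆ = (1 : ℤ) • Y1) (x2 : ⁅X, Y2⁆ = (-2 : ℤ) • Y2)
    (hY3 : Y3 = ⁅Y1, Y2⁆) (hY4 : Y4 = ⁅Y1, Y3⁆) :
    ⁅D, ⁅Y2, Y3⁆⁆ = 0 ∧ (⁅Y2, Y3⁆ = 0 → ⁅D, ⁅Y2, Y4⁆⁆ = 0) := by
  have f3 : Y3 f = 0 := by simp [hY3, Derivation.commutator_apply, f1, f2]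
  have g3 : Y3 g = 0 := by simp [hY3, Derivation.commutator_apply, g1, g2]
  have g4 : Y4 g = 0 := by simp [hY4, Derivation.commutator_apply, g1, g3]
  have x3 : ⁅X, Y3⁆ = -Y3 := by
    rw [hY3, leibniz_lie, x1, x2, one_smul, lie_zsmul]
    module
  have x4 : ⁅X, Y4⁆ = 0 := by
    rw [hY4, leibniz_lie, x1, x3, one_smul, lie_neg, add_neg_cancel]
  have s12 : ⁅Y1, X⁆ = -Y1 := by rw [← lie_skew, x1, one_smul]
  have s21 : ⁅Y2, Y1⁆ = -Y3 := by rw [hY3, lie_skew]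
  have d3 : ⁅D, Y3⁆ = (2 : ℤ) • (f • Y2) + g • Y1 := by
    rw [hY3, leibniz_lie, d1, d2, neg_lie, lie_neg, lie_smul_left' _ _ _ f2,
      lie_smul_right' _ _ _ g1, x2, s12, smul_neg, neg_neg, smul_comm, neg_smul, neg_neg]
  have d4 : ⁅D, Y4⁆ = (3 : ℤ) • (f • Y3) := by
    rw [hY4, leibniz_lie, d1, d3, neg_lie, lie_smul_left' _ _ _ f3, x3, lie_add, lie_zsmul,
      lie_smul_right' _ _ _ f1, lie_smul_right' _ _ _ g1, lie_self, ← hY3, smul_neg,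
      neg_neg, smul_zero, add_zero]
    module
  refine ⟨?_, fun z => ?_⟩
  · rw [leibniz_lie, d2, d3, neg_lie, lie_smul_left' _ _ _ g3, x3, lie_add, lie_zsmul,
      lie_smul_right' _ _ _ f2, lie_smul_right' _ _ _ g2, lie_self, s21]
    simp
  · rw [leibniz_lie, d2, d4, neg_lie, lie_smul_left' _ _ _ g4, x4, lie_zsmul,
      lie_smul_right' _ _ _ f2, z]
    simp

end Generic

lemma E_mul (a b : ℤ) : E a * E b = E (a + b) := by
  rw [E, E, E, AddMonoidAlgebra.single_mul_single, mul_one]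

lemma lie_D_Xf (D X Y : Derivation ℂ QP QP) (f : QP) (hD : IsD D) (hX : IsX0 X)
    (hY : IsXf D f Y) : ⁅D, Y⁆ = -(f • X) := by
  rw [← sub_eq_zero]
  refine eq_zero_of_gen _ (fun q => ?_) fun n hn => ?_
  · have h1 := hY.2 1 le_rfl
    simp only [Nat.sub_self, Function.iterate_zero, id] at h1
    simp only [Derivation.sub_apply, Derivation.neg_apply, Derivation.smul_apply,
      Derivation.commutator_apply, hY.1, hD.2, hX.2, map_zero, map_zsmul, Derivation.leibniz, h1,
      smul_eq_mul, mul_zero, zero_add]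
    simp only [zsmul_eq_mul]
    ring
  · obtain ⟨m, rfl⟩ : ∃ m, n = m + 1 := ⟨n - 1, by omega⟩
    simp [Derivation.commutator_apply, hY.2, hD.1, hX.1, ← Function.iterate_succ_apply']

/-- `X₀` exists; given `Y₁ = X_{E 1}` it can be recovered from `⁅D, Y₁⁆ = -E(1) X₀`. -/
lemma exists_X0 (D Y : Derivation ℂ QP QP) (hD : IsD D) (hY : IsXf D (E 1) Y) :
    ∃ X, IsX0 X := by
  refine ⟨-(E (-1) • ⁅D, Y⁆), fun n hn => ?_, fun q => ?_⟩
  · obtain ⟨m, rfl⟩ : ∃ m, n = m + 1 := ⟨n - 1, by omega⟩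
    simp [Derivation.commutator_apply, hY.2, hD.1, ← Function.iterate_succ_apply']
  · have h1 := hY.2 1 le_rfl
    simp only [Nat.sub_self, Function.iterate_zero, id] at h1
    have h2 : E (-1) * E 1 = 1 := E_mul _ _
    simp only [Derivation.neg_apply, Derivation.smul_apply,
      Derivation.commutator_apply, hY.1, hD.2, map_zero, map_zsmul, Derivation.leibniz, h1,
      smul_eq_mul, mul_zero, zero_add]
    simp only [zsmul_eq_mul]
    linear_combination ((q : QP) * E q) * h2

lemma lie_D_X0 (D X : Derivation ℂ QP QP) (hD : IsD D) (hX : IsX0 X) : ⁅D, X⁆ = 0 := by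
  refine eq_zero_of_gen _ (fun q => ?_) fun n hn => ?_
  · simp only [Derivation.commutator_apply, hD.2, hX.2, map_zsmul, Derivation.leibniz,
      hX.1 1 le_rfl, smul_eq_mul, mul_zero, add_zero]
    simp only [zsmul_eq_mul]
    ring
  · simp [Derivation.commutator_apply, hD.1 n hn, hX.1 n hn, hX.1 (n + 1) (by omega)]

lemma lie_X0_Xf (D X Y : Derivation ℂ QP QP) (a : ℤ) (hD : IsD D) (hX : IsX0 X)
    (hY : IsXf D (E a) Y) : ⁅X, Y⁆ = a • Y := by
  have hc (x : QP) : X (D x) = D (X x) := by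
    have h := congrArg (fun W : Derivation ℂ QP QP => W x) (lie_D_X0 D X hD hX)
    simp only [Derivation.commutator_apply, Derivation.zero_apply, sub_eq_zero] at h
    exact h.symm
  have hi (n : ℕ) : X ((⇑D)^[n] (E a)) = a • (⇑D)^[n] (E a) := by
    induction n with
    | zero => exact hX.2 a
    | succ n ih => rw [Function.iterate_succ_apply', hc, ih, map_zsmul]
  rw [← sub_eq_zero]
  refine eq_zero_of_gen _ (fun q => ?_) fun n hn => ?_
  · simp only [Derivation.sub_apply, Derivation.smul_apply, Derivation.commutator_apply, hY.1,
      hX.2, map_zsmul, map_zero, smul_zero, sub_zero]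
  · simp only [Derivation.sub_apply, Derivation.smul_apply, Derivation.commutator_apply, hX.1 n hn,
      hY.2 n hn, hi, map_zero, sub_zero, sub_self]

/-- With `Y₃' := ⁅Y₁', Y₂'⁆` and `Y₄' := ⁅Y₁', Y₃'⁆`, one has `⁅Y₂', Y₃'⁆ = 0`
and `⁅Y₂', Y₄'⁆ = 0`. -/
theorem stmt_12 (D Y1 Y2 Y3 Y4 : Derivation ℂ QP QP) (hD : IsD D)
    (hY1 : IsXf D (E 1) Y1) (hY2 : IsXf D (E (-2)) Y2)
    (hY3 : Y3 = ⁅Y1, Y2⁆) (hY4 : Y4 = ⁅Y1, Y3⁆) :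
    ⁅Y2, Y3⁆ = 0 ∧ ⁅Y2, Y4⁆ = 0 := by
  obtain ⟨X, hX⟩ := exists_X0 D Y1 hD hY1
  have d1 := lie_D_Xf D X Y1 _ hD hX hY1
  have d2 := lie_D_Xf D X Y2 _ hD hX hY2
  have x1 := lie_X0_Xf D X Y1 _ hD hX hY1
  have x2 := lie_X0_Xf D X Y2 _ hD hX hY2
  have e1 := hY1.1
  have e2 := hY2.1
  have e3 (q) : Y3 (E q) = 0 := by simp [hY3, Derivation.commutator_apply, e1, e2]
  have e4 (q) : Y4 (E q) = 0 := by simp [hY4, Derivation.commutator_apply, e1, e3]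
  have u1 : Y1 (uvar 1) = E 1 := hY1.2 1 le_rfl
  have u2 : Y2 (uvar 1) = E (-2) := hY2.2 1 le_rfl
  have u3 : Y3 (uvar 1) = 0 := by simp [hY3, Derivation.commutator_apply, e1, e2, u1, u2]
  have u4 : Y4 (uvar 1) = 0 := by simp [hY4, Derivation.commutator_apply, e3, u1, u3]
  obtain ⟨h3, h4⟩ := lie_D_brackets D X Y1 Y2 Y3 Y4 (E 1) (E (-2)) (e1 _) (e1 _) (e2 _) (e2 _)
    d1 d2 x1 x2 hY3 hY4
  have z : ⁅Y2, Y3⁆ = 0 := by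
    refine eq_zero_of_comm D _ hD (fun q => ?_) ?_ h3
    · simp [Derivation.commutator_apply, e2, e3]
    · simp [Derivation.commutator_apply, u2, u3, e3]
  refine ⟨z, eq_zero_of_comm D _ hD (fun q => ?_) ?_ (h4 z)⟩
  · simp [Derivation.commutator_apply, e2, e4]
  · simp [Derivation.commutator_apply, u2, u4, e4]
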